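/- In the tensor product model of F_γ ⊗ D⁺_j (see context), assume j is a half-integer with j ≥ −½ and j > γ − 1. For M ∈ j+1−γ+ℕ₀, let V_M ⊆ W be the span of {e_ν ⊗ f_{M−ν} : ν ∈ M_γ, M−ν ∈ j+1+ℕ₀} (the J₀-eigenspace for eigenvalue M). Then Q maps V_M into itself, and the restriction of Q to V_M is diagonalizable: V_M has a basis of Q-eigenvectors, with eigenvalues exactly the pairwise distinct numbers −(j+μ)(j+μ+1) for μ ∈ {−γ, −γ+1, …, min(γ, M−j−1)}. -/

import Mathlib

/-!
Write `λ_i = -(j+μ)(j+μ+1)` for `μ = -γ + i`, and let `M` be the weight of `V_t := V_M`. Since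
`λ_{t+1} = -M(M+1)`, the definition of `Q` and the relation `[J₋, J₊] = 2 J₀` give
`Q = λ_{t+1} + J₋J₊` on `V_t` and `Q = λ_{t+1} + J₊J₋` on `V_{t+1}`, with the same scalar. For maps
`f : V → W` and `g : W → V` with `dim V ≤ dim W`, every eigenvalue of `gf` is an eigenvalue of `fg`,
and `0` is one too if `dim V < dim W`. So the eigenvalues of `Q` on `V_t` persist on `V_{t+1}`,
where `λ_{t+1}` joins them as long as the dimension grows, that is for `t < 2γ`. This exhibits
`dim V_t` eigenvalues on `V_t`, and diagonalizability follows once they are pairwise distinct.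
-/

noncomputable section

/-- The principal complex square root, `√z = z^{1/2}` (so `(√z)² = z` for all `z ∈ ℂ`). -/
def csqrt (z : ℂ) : ℂ := z ^ (1 / 2 : ℂ)

/-- `Γ₊(x,y) = i √(x-y) √(x+y+1)`. -/
def Gp (x y : ℂ) : ℂ := Complex.I * csqrt (x - y) * csqrt (x + y + 1)

/-- `Γ₋(x,y) = i √(x+y) √(x-y+1)`. -/
def Gm (x y : ℂ) : ℂ := Complex.I * csqrt (x + y) * csqrt (x - y + 1)

/-- The carrier of the coupling `F_γ ⊗ D⁺_j` with `2γ = N`: the basis vector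
`e_ν ⊗ f_m` with `ν = -γ + a` (`a ≤ N`) and `m = j + 1 + b` is indexed by
`(a, b) : Fin (N+1) × ℕ`. -/
abbrev Wmod (N : ℕ) := (Fin (N + 1) × ℕ) →₀ ℂ

/-- `γ = N/2` as a complex number. -/
def gammaC (N : ℕ) : ℂ := (N : ℂ) / 2

/-- `ν = -γ + a`. -/
def nuC (N : ℕ) (a : Fin (N + 1)) : ℂ := -gammaC N + (a : ℕ)

/-- `m = j + 1 + b`. -/
def mC (j : ℂ) (b : ℕ) : ℂ := j + 1 + (b : ℕ)

/-- `J₀ (e_ν ⊗ f_m) = (ν + m) e_ν ⊗ f_m`. -/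
def J0op (N : ℕ) (j : ℂ) : Wmod N →ₗ[ℂ] Wmod N :=
  Finsupp.lsum ℂ fun ab => (nuC N ab.1 + mC j ab.2) • Finsupp.lsingle ab

/-- `J₊ (e_ν ⊗ f_m) = Γ₊(γ,ν) e_{ν+1} ⊗ f_m + Γ₊(j,m) e_ν ⊗ f_{m+1}` (terms with
vanishing coefficient drop out, so the wrap-around `Fin` index is harmless). -/
def Jpop (N : ℕ) (j : ℂ) : Wmod N →ₗ[ℂ] Wmod N :=
  Finsupp.lsum ℂ fun ab =>
    Gp (gammaC N) (nuC N ab.1) • Finsupp.lsingle (ab.1 + 1, ab.2) +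
    Gp j (mC j ab.2) • Finsupp.lsingle (ab.1, ab.2 + 1)

/-- `J₋ (e_ν ⊗ f_m) = Γ₋(γ,ν) e_{ν-1} ⊗ f_m + Γ₋(j,m) e_ν ⊗ f_{m-1}` (terms with
vanishing coefficient drop out, so the truncated index is harmless). -/
def Jmop (N : ℕ) (j : ℂ) : Wmod N →ₗ[ℂ] Wmod N :=
  Finsupp.lsum ℂ fun ab =>
    Gm (gammaC N) (nuC N ab.1) • Finsupp.lsingle (ab.1 - 1, ab.2) +
    Gm j (mC j ab.2) • Finsupp.lsingle (ab.1, ab.2 - 1)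

/-- The Casimir operator `Q = -J₀(J₀+1) + J₋J₊`. -/
def Qop (N : ℕ) (j : ℂ) : Wmod N →ₗ[ℂ] Wmod N :=
  -(J0op N j ∘ₗ (J0op N j + LinearMap.id)) + Jmop N j ∘ₗ Jpop N j

/-- The generating set of the `J₀`-eigenspace `V_M`, `M = j + 1 - γ + t`:
the basis vectors `e_ν ⊗ f_{M-ν}` with `ν = -γ + a ∈ M_γ` and `M - ν ∈ j + 1 + ℕ₀`. -/
def VMset (N t : ℕ) : Set (Wmod N) :=
  {w | ∃ a : Fin (N + 1), (a : ℕ) ≤ t ∧ w = Finsupp.single (a, t - (a : ℕ)) (1 : ℂ)}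

/-- The `J₀`-eigenspace `V_M ⊆ F_γ ⊗ D⁺_j`, `M = j + 1 - γ + t`. -/
def VM (N t : ℕ) : Submodule ℂ (Wmod N) := Submodule.span ℂ (VMset N t)

section LinearAlgebra

open Module

variable {K V W : Type*} [Field K] [AddCommGroup V] [Module K V] [AddCommGroup W] [Module K W]

theorem exists_eigenvectors_span_eq {T : End K V} {p : Submodule K V} [FiniteDimensional K p]
    {ι : Type*} [Fintype ι] {μ : ι → K} (hμ : Function.Injective μ)
    (hcard : Fintype.card ι = finrank K p) (h : ∀ i, ∃ v ∈ p, v ≠ 0 ∧ T v = μ i • v) :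
    ∃ v : ι → V, LinearIndependent K v ∧ Submodule.span K (Set.range v) = p ∧
      ∀ i, T (v i) = μ i • v i := by
  choose v hvp hv0 hTv using h
  have hli : LinearIndependent K v := End.eigenvectors_linearIndependent' T μ hμ v fun i =>
    ⟨End.mem_eigenspace_iff.2 (hTv i), hv0 i⟩
  refine ⟨v, hli, ?_, hTv⟩
  refine Submodule.eq_of_le_of_finrank_eq (Submodule.span_le.2 (Set.range_subset_iff.2 hvp)) ?_
  rw [finrank_span_eq_card hli, hcard]

theorem exists_ne_zero_comp_apply_eq_smul [FiniteDimensional K V] [FiniteDimensional K W]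
    {f : V →ₗ[K] W} {g : W →ₗ[K] V} {μ : K} {v : V} (h : finrank K V ≤ finrank K W) (hv0 : v ≠ 0)
    (hv : g (f v) = μ • v) : ∃ w, w ≠ 0 ∧ f (g w) = μ • w := by
  by_cases hfv : f v = 0
  · obtain rfl : μ = 0 := by simpa [hfv, hv0, eq_comm] using hv
    by_cases hg : Function.Injective g
    · have hrank : finrank K W = finrank K V :=
        (LinearMap.finrank_le_finrank_of_injective hg).antisymm h
      obtain ⟨w, rfl⟩ :=
        (LinearMap.injective_iff_surjective_of_finrank_eq_finrank hrank).1 hg v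
      exact ⟨w, ne_of_apply_ne g (by rwa [map_zero]), by rw [hfv, zero_smul]⟩
    · obtain ⟨w, hw, hw0⟩ :=
        Submodule.exists_mem_ne_zero_of_ne_bot (mt LinearMap.ker_eq_bot.1 hg)
      exact ⟨w, hw0, by rw [LinearMap.mem_ker.1 hw, map_zero, zero_smul]⟩
  · exact ⟨f v, hfv, by rw [hv, map_smul]⟩

variable {p : Submodule K V} {q : Submodule K W} [FiniteDimensional K p] [FiniteDimensional K q]
  {f : V →ₗ[K] W} {g : W →ₗ[K] V}

theorem exists_mem_ne_zero_comp_apply_eq_smul (hf : ∀ x ∈ p, f x ∈ q) (hg : ∀ y ∈ q, g y ∈ p)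
    (h : finrank K p ≤ finrank K q) {μ : K} (hμ : ∃ v ∈ p, v ≠ 0 ∧ g (f v) = μ • v) :
    ∃ w ∈ q, w ≠ 0 ∧ f (g w) = μ • w := by
  obtain ⟨v, hvp, hv0, hv⟩ := hμ
  obtain ⟨w, hw0, hw⟩ := exists_ne_zero_comp_apply_eq_smul (f := f.restrict hf)
    (g := g.restrict hg) (v := ⟨v, hvp⟩) h (by simpa using hv0) (Subtype.ext hv)
  exact ⟨w, w.2, by simpa using hw0, congrArg Subtype.val hw⟩

theorem exists_mem_ne_zero_apply_eq_zero_of_finrank_lt (hg : ∀ y ∈ q, g y ∈ p)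
    (h : finrank K p < finrank K q) : ∃ w ∈ q, w ≠ 0 ∧ g w = 0 := by
  obtain ⟨w, hw, hw0⟩ := Submodule.exists_mem_ne_zero_of_ne_bot
    (LinearMap.ker_ne_bot_of_finrank_lt (f := g.restrict hg) h)
  exact ⟨w, w.2, by simpa using hw0, congrArg Subtype.val (LinearMap.mem_ker.1 hw)⟩

end LinearAlgebra

theorem csqrt_zero : csqrt 0 = 0 := by simp [csqrt]

theorem csqrt_mul_self (z : ℂ) : csqrt z * csqrt z = z := by
  simpa [csqrt, sq] using Complex.cpow_ofNat_inv_pow z 2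

theorem Gp_self (x : ℂ) : Gp x x = 0 := by simp [Gp, csqrt_zero]

theorem Gm_neg_self (x : ℂ) : Gm x (-x) = 0 := by simp [Gm, csqrt_zero]

theorem Gp_mul_self (x y : ℂ) : Gp x y * Gp x y = -((x - y) * (x + y + 1)) := by
  calc Gp x y * Gp x y
      = (Complex.I * Complex.I) * (csqrt (x - y) * csqrt (x - y)) *
          (csqrt (x + y + 1) * csqrt (x + y + 1)) := by rw [Gp]; ring
    _ = -((x - y) * (x + y + 1)) := by
        rw [Complex.I_mul_I, csqrt_mul_self, csqrt_mul_self]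
        ring

theorem Gm_add_one (x y : ℂ) : Gm x (y + 1) = Gp x y := by
  rw [Gm, Gp, ← add_assoc, sub_add_eq_sub_sub, sub_add_cancel, mul_right_comm]

theorem Gp_mul_Gm_add_one (x y : ℂ) : Gp x y * Gm x (y + 1) = -((x - y) * (x + y + 1)) := by
  rw [Gm_add_one, Gp_mul_self]

theorem nuC_zero (N : ℕ) : nuC N 0 = -gammaC N := by simp [nuC]

theorem nuC_last (N : ℕ) : nuC N (Fin.last N) = gammaC N := by
  simp only [nuC, gammaC, Fin.val_last]
  ring

theorem nuC_add_one {N : ℕ} {a : Fin (N + 1)} (ha : a ≠ Fin.last N) :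
    nuC N (a + 1) = nuC N a + 1 := by
  rw [nuC, nuC, Fin.val_add_one_of_lt (Fin.lt_last_iff_ne_last.2 ha), Nat.cast_succ, add_assoc]

theorem mC_zero (j : ℂ) : mC j 0 = j + 1 := by simp [mC]

theorem mC_add_one (j : ℂ) (b : ℕ) : mC j (b + 1) = mC j b + 1 := by
  rw [mC, mC, Nat.cast_succ, add_assoc _ (b : ℂ)]

theorem Gm_mC_zero (j : ℂ) : Gm j (mC j 0) = 0 := by simp [Gm, mC, csqrt_zero]

-- At `a = Fin.last N` the index `a + 1` wraps around to `0`, but `Γ₊(γ, γ) = 0`.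
theorem Gp_mul_Gm_nuC (N : ℕ) (a : Fin (N + 1)) :
    Gp (gammaC N) (nuC N a) * Gm (gammaC N) (nuC N (a + 1)) =
      -((gammaC N - nuC N a) * (gammaC N + nuC N a + 1)) := by
  obtain rfl | ha := eq_or_ne a (Fin.last N)
  · simp [nuC_last, Gp_self]
  · rw [nuC_add_one ha, Gp_mul_Gm_add_one]

theorem Gm_mul_Gp_nuC (N : ℕ) (a : Fin (N + 1)) :
    Gm (gammaC N) (nuC N a) * Gp (gammaC N) (nuC N (a - 1)) =
      -((gammaC N + nuC N a) * (gammaC N - nuC N a + 1)) := by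
  obtain ⟨a, rfl⟩ : ∃ a', a = a' + 1 := ⟨a - 1, by simp⟩
  rw [add_sub_cancel_right]
  obtain rfl | ha := eq_or_ne a (Fin.last N)
  · simp [nuC_zero, Gm_neg_self]
  · rw [nuC_add_one ha, mul_comm, Gp_mul_Gm_add_one]
    ring

theorem Gp_mul_Gm_mC (j : ℂ) (b : ℕ) :
    Gp j (mC j b) * Gm j (mC j (b + 1)) = -((j - mC j b) * (j + mC j b + 1)) := by
  rw [mC_add_one, Gp_mul_Gm_add_one]

theorem J0op_single (N : ℕ) (j : ℂ) (a : Fin (N + 1)) (b : ℕ) :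
    J0op N j (Finsupp.single (a, b) 1) = (nuC N a + mC j b) • Finsupp.single (a, b) 1 := by
  simp [J0op]

theorem Jpop_single (N : ℕ) (j : ℂ) (a : Fin (N + 1)) (b : ℕ) :
    Jpop N j (Finsupp.single (a, b) 1) =
      Gp (gammaC N) (nuC N a) • Finsupp.single (a + 1, b) 1 +
        Gp j (mC j b) • Finsupp.single (a, b + 1) 1 := by
  simp [Jpop]

theorem Jmop_single (N : ℕ) (j : ℂ) (a : Fin (N + 1)) (b : ℕ) :
    Jmop N j (Finsupp.single (a, b) 1) =
      Gm (gammaC N) (nuC N a) • Finsupp.single (a - 1, b) 1 +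
        Gm j (mC j b) • Finsupp.single (a, b - 1) 1 := by
  simp [Jmop]

theorem Jmop_comp_Jpop (N : ℕ) (j : ℂ) :
    Jmop N j ∘ₗ Jpop N j = Jpop N j ∘ₗ Jmop N j + (2 : ℂ) • J0op N j := by
  refine Finsupp.lhom_ext' fun ⟨a, b⟩ => LinearMap.ext_ring ?_
  simp only [LinearMap.comp_apply, LinearMap.add_apply, LinearMap.smul_apply,
    Finsupp.lsingle_apply, Jpop_single, Jmop_single, J0op_single, map_add, map_smul,
    add_sub_cancel_right, sub_add_cancel, Nat.add_sub_cancel, smul_add, smul_smul]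
  rw [Gp_mul_Gm_nuC, Gm_mul_Gp_nuC, Gp_mul_Gm_mC]
  cases b with
  | zero =>
    rw [Gm_mC_zero, mC_zero]
    module
  | succ b =>
    rw [Nat.add_sub_cancel, mul_comm (Gm j _) (Gp j _), Gp_mul_Gm_mC, mC_add_one]
    module

theorem single_mem_VM {N t : ℕ} {a : Fin (N + 1)} {b : ℕ} (h : (a : ℕ) + b = t) :
    (Finsupp.single (a, b) 1 : Wmod N) ∈ VM N t := by
  obtain rfl : b = t - (a : ℕ) := by lia
  exact Submodule.subset_span ⟨a, by lia, rfl⟩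

theorem VM_le_of_single_mem {N t : ℕ} {S : Submodule ℂ (Wmod N)}
    (h : ∀ (a : Fin (N + 1)) (b : ℕ), (a : ℕ) + b = t → (Finsupp.single (a, b) 1 : Wmod N) ∈ S) :
    VM N t ≤ S := by
  refine Submodule.span_le.2 ?_
  rintro _ ⟨a, ha, rfl⟩
  exact h a _ (by lia)

theorem finrank_VM (N t : ℕ) : Module.finrank ℂ (VM N t) = min N t + 1 := by
  let index : Fin (min N t + 1) → Fin (N + 1) × ℕ := fun k => (⟨k, by lia⟩, t - k)
  have hindex : Function.Injective index := fun k l h => by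
    simpa [index, Fin.ext_iff] using congrArg (fun x => (x.1 : ℕ)) h
  let u : Fin (min N t + 1) → Wmod N := fun k => Finsupp.single (index k) 1
  have hli : LinearIndependent ℂ u :=
    (Finsupp.linearIndependent_single_one ℂ (Fin (N + 1) × ℕ)).comp index hindex
  have hspan : Submodule.span ℂ (Set.range u) = VM N t := by
    refine le_antisymm (Submodule.span_le.2 ?_) (VM_le_of_single_mem fun a b h => ?_)
    · rintro _ ⟨k, rfl⟩
      exact single_mem_VM (by simp only; lia)
    · obtain rfl : b = t - (a : ℕ) := by lia
      exact Submodule.subset_span ⟨⟨a, by lia⟩, rfl⟩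
  rw [← hspan, finrank_span_eq_card hli, Fintype.card_fin]

instance finiteDimensional_VM (N t : ℕ) : FiniteDimensional ℂ (VM N t) :=
  FiniteDimensional.of_finrank_pos (by rw [finrank_VM]; lia)

/-- The weight `M = j + 1 - γ + t` by which `J₀` acts on `VM N t`. -/
def weight (N : ℕ) (j : ℂ) (t : ℕ) : ℂ := j + 1 - gammaC N + t

theorem J0op_of_mem_VM {N t : ℕ} (j : ℂ) {w : Wmod N} (hw : w ∈ VM N t) :
    J0op N j w = weight N j t • w := by
  suffices VM N t ≤ LinearMap.eqLocus (J0op N j) (weight N j t • LinearMap.id) from this hw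
  refine VM_le_of_single_mem fun a b h => ?_
  have hweight : nuC N a + mC j b = weight N j t := by
    rw [nuC, mC, weight, ← h, Nat.cast_add]
    ring
  rw [LinearMap.mem_eqLocus, J0op_single, hweight, LinearMap.smul_apply, LinearMap.id_apply]

theorem Jpop_mem_VM {N t : ℕ} (j : ℂ) {w : Wmod N} (hw : w ∈ VM N t) :
    Jpop N j w ∈ VM N (t + 1) := by
  suffices VM N t ≤ (VM N (t + 1)).comap (Jpop N j) from this hw
  refine VM_le_of_single_mem fun a b h => ?_
  rw [Submodule.mem_comap, Jpop_single]
  refine add_mem ?_ (Submodule.smul_mem _ _ (single_mem_VM (by lia)))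
  obtain rfl | ha := eq_or_ne a (Fin.last N)
  · simp [nuC_last, Gp_self]
  · refine Submodule.smul_mem _ _ (single_mem_VM ?_)
    rw [Fin.val_add_one_of_lt (Fin.lt_last_iff_ne_last.2 ha)]
    lia

theorem Jmop_mem_VM {N t : ℕ} (j : ℂ) {w : Wmod N} (hw : w ∈ VM N (t + 1)) :
    Jmop N j w ∈ VM N t := by
  suffices VM N (t + 1) ≤ (VM N t).comap (Jmop N j) from this hw
  refine VM_le_of_single_mem fun a b h => ?_
  rw [Submodule.mem_comap, Jmop_single]
  refine add_mem ?_ ?_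
  · obtain rfl | ha := eq_or_ne a 0
    · simp [nuC_zero, Gm_neg_self]
    · refine Submodule.smul_mem _ _ (single_mem_VM ?_)
      have hpos : (a : ℕ) ≠ 0 := Fin.val_ne_zero_iff.2 ha
      rw [Fin.coe_sub_one, if_neg ha]
      lia
  · cases b with
    | zero => simp [Gm_mC_zero]
    | succ b => exact Submodule.smul_mem _ _ (single_mem_VM (by lia))

theorem Jmop_of_mem_VM_zero {N : ℕ} (j : ℂ) {w : Wmod N} (hw : w ∈ VM N 0) :
    Jmop N j w = 0 := by
  suffices VM N 0 ≤ LinearMap.ker (Jmop N j) from this hw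
  refine VM_le_of_single_mem fun a b h => ?_
  obtain ⟨ha, rfl⟩ := add_eq_zero.1 h
  obtain rfl : a = 0 := Fin.ext ha
  simp [Jmop_single, nuC_zero, Gm_neg_self, Gm_mC_zero]

theorem exists_lowest_weight {N t : ℕ} (j : ℂ) (ht : t ≤ N) :
    ∃ w ∈ VM N t, w ≠ 0 ∧ Jmop N j w = 0 := by
  cases t with
  | zero =>
    have hmem : (Finsupp.single (0, 0) 1 : Wmod N) ∈ VM N 0 := single_mem_VM rfl
    exact ⟨_, hmem, by simp, Jmop_of_mem_VM_zero j hmem⟩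
  | succ t =>
    refine exists_mem_ne_zero_apply_eq_zero_of_finrank_lt (fun _ => Jmop_mem_VM j) ?_
    rw [finrank_VM, finrank_VM]
    lia

/-- The Casimir eigenvalue `-(j + μ)(j + μ + 1)` with `μ = -γ + i`. -/
def casimirEigenvalue (N : ℕ) (j : ℂ) (i : ℕ) : ℂ :=
  -((j + (-gammaC N + i)) * (j + (-gammaC N + i) + 1))

theorem casimirEigenvalue_eq_iff {N i i' : ℕ} {j : ℂ} :
    casimirEigenvalue N j i = casimirEigenvalue N j i' ↔
      i = i' ∨ 2 * j + 1 + (i + i' : ℕ) = N := by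
  have hfactor : casimirEigenvalue N j i - casimirEigenvalue N j i' =
      (i' - i) * (2 * j + 1 + (i + i' : ℕ) - N) := by
    simp only [casimirEigenvalue, gammaC]
    push_cast
    ring
  rw [← sub_eq_zero, hfactor, mul_eq_zero, sub_eq_zero, sub_eq_zero, Nat.cast_inj,
    eq_comm (a := i')]

theorem casimirEigenvalue_eq_weight (N : ℕ) (j : ℂ) (t : ℕ) :
    casimirEigenvalue N j t = -(weight N j t * (weight N j t - 1)) := by
  simp only [casimirEigenvalue, weight]
  ring

theorem casimirEigenvalue_add_one (N : ℕ) (j : ℂ) (t : ℕ) :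
    casimirEigenvalue N j (t + 1) = -(weight N j t * (weight N j t + 1)) := by
  simp only [casimirEigenvalue, weight]
  push_cast
  ring

theorem Qop_eq_add_Jmop_Jpop {N t : ℕ} (j : ℂ) {w : Wmod N} (hw : w ∈ VM N t) :
    Qop N j w = casimirEigenvalue N j (t + 1) • w + Jmop N j (Jpop N j w) := by
  simp only [Qop, LinearMap.add_apply, LinearMap.neg_apply, LinearMap.comp_apply,
    LinearMap.id_apply, map_add, J0op_of_mem_VM j hw, map_smul, casimirEigenvalue_add_one]
  module

theorem Qop_eq_add_Jpop_Jmop {N t : ℕ} (j : ℂ) {w : Wmod N} (hw : w ∈ VM N t) :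
    Qop N j w = casimirEigenvalue N j t • w + Jpop N j (Jmop N j w) := by
  have hcomm : Jmop N j (Jpop N j w) = Jpop N j (Jmop N j w) + (2 : ℂ) • J0op N j w :=
    LinearMap.congr_fun (Jmop_comp_Jpop N j) w
  rw [Qop_eq_add_Jmop_Jpop j hw, hcomm, J0op_of_mem_VM j hw, casimirEigenvalue_add_one,
    casimirEigenvalue_eq_weight]
  module

theorem Qop_mem_VM {N t : ℕ} (j : ℂ) {w : Wmod N} (hw : w ∈ VM N t) : Qop N j w ∈ VM N t := by
  rw [Qop_eq_add_Jmop_Jpop j hw]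
  exact add_mem (Submodule.smul_mem _ _ hw) (Jmop_mem_VM j (Jpop_mem_VM j hw))

theorem exists_eigenvector_casimirEigenvalue_self {N t : ℕ} (j : ℂ) (ht : t ≤ N) :
    ∃ w ∈ VM N t, w ≠ 0 ∧ Qop N j w = casimirEigenvalue N j t • w := by
  obtain ⟨w, hw, hw0, hJ⟩ := exists_lowest_weight j ht
  refine ⟨w, hw, hw0, ?_⟩
  rw [Qop_eq_add_Jpop_Jmop j hw, hJ, map_zero, add_zero]

theorem exists_eigenvector_succ {N t : ℕ} {j μ : ℂ}
    (h : ∃ w ∈ VM N t, w ≠ 0 ∧ Qop N j w = μ • w) :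
    ∃ w ∈ VM N (t + 1), w ≠ 0 ∧ Qop N j w = μ • w := by
  obtain ⟨v, hv, hv0, hQv⟩ := h
  have hJJ : Jmop N j (Jpop N j v) = (μ - casimirEigenvalue N j (t + 1)) • v := by
    rw [sub_smul, ← hQv, Qop_eq_add_Jmop_Jpop j hv, add_sub_cancel_left]
  have hle : Module.finrank ℂ (VM N t) ≤ Module.finrank ℂ (VM N (t + 1)) := by
    rw [finrank_VM, finrank_VM]
    lia
  obtain ⟨w, hw, hw0, hJw⟩ := exists_mem_ne_zero_comp_apply_eq_smul
    (fun _ => Jpop_mem_VM j) (fun _ => Jmop_mem_VM j) hle ⟨v, hv, hv0, hJJ⟩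
  refine ⟨w, hw, hw0, ?_⟩
  rw [Qop_eq_add_Jpop_Jmop j hw, hJw, sub_smul, add_sub_cancel]

theorem exists_eigenvector {N i t : ℕ} (j : ℂ) (hi : i ≤ N) (hit : i ≤ t) :
    ∃ w ∈ VM N t, w ≠ 0 ∧ Qop N j w = casimirEigenvalue N j i • w := by
  induction t, hit using Nat.le_induction with
  | base => exact exists_eigenvector_casimirEigenvalue_self j hi
  | succ t _ ih => exact exists_eigenvector_succ ih

-- `s` stands for the sums `i + i'` of distinct indices `i, i' ≤ min N t`.
theorem casimir_diagonalizable_on_VM_general (N : ℕ) (j : ℂ) (t : ℕ)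
    (hj : ∀ s : ℕ, 0 < s → s < 2 * min N t → 2 * j + 1 + s ≠ N) :
    (∀ w ∈ VM N t, Qop N j w ∈ VM N t) ∧
    ∃ v : Fin (min N t + 1) → Wmod N,
      LinearIndependent ℂ v ∧
      Submodule.span ℂ (Set.range v) = VM N t ∧
      (∀ i, Qop N j (v i) = casimirEigenvalue N j i • v i) ∧
      (∀ i i' : Fin (min N t + 1), i ≠ i' →
        casimirEigenvalue N j i ≠ casimirEigenvalue N j i') := by
  have hinj : Function.Injective fun i : Fin (min N t + 1) => casimirEigenvalue N j i := by
    intro i i' h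
    by_contra hne
    have hval : (i : ℕ) ≠ i' := Fin.val_ne_of_ne hne
    exact (casimirEigenvalue_eq_iff.1 h).elim hval (hj _ (by lia) (by lia))
  have hcard : Fintype.card (Fin (min N t + 1)) = Module.finrank ℂ (VM N t) := by
    rw [Fintype.card_fin, finrank_VM]
  obtain ⟨v, hli, hspan, hv⟩ := exists_eigenvectors_span_eq hinj hcard fun i =>
    exists_eigenvector (t := t) j (by lia : (i : ℕ) ≤ N) (by lia)
  exact ⟨fun _ => Qop_mem_VM j, v, hli, hspan, hv, fun _ _ => hinj.ne⟩

theorem two_mul_add_one_add_ne_of_lt {N : ℕ} {q : ℚ} (hq : (N : ℚ) / 2 - 1 < q) {s : ℕ}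
    (hs : 0 < s) : 2 * (q : ℂ) + 1 + s ≠ N := by
  have hs' : (1 : ℚ) ≤ s := Nat.one_le_cast.2 hs
  have hne : 2 * q + 1 + s ≠ N := by linarith
  exact_mod_cast hne

/-- In `F_γ ⊗ D⁺_j` with `j` a half-integer, `j ≥ -½` and `j > γ - 1`, the Casimir `Q`
preserves each `J₀`-eigenspace `V_M` and its restriction to `V_M` is diagonalizable,
with eigenvalues exactly the pairwise distinct numbers `-(j+μ)(j+μ+1)`,
`μ ∈ {-γ, …, min(γ, M - j - 1)}`. -/
theorem casimir_diagonalizable_on_VM (N : ℕ) (hN : 1 ≤ N) (jr : ℚ)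
    (hhalf : ∃ k : ℤ, (k : ℚ) = 2 * jr) (hge : -(1 / 2) ≤ jr)
    (hgt : (N : ℚ) / 2 - 1 < jr) (t : ℕ) :
    (∀ w ∈ VM N t, Qop N (jr : ℂ) w ∈ VM N t) ∧
    ∃ v : Fin (min N t + 1) → Wmod N,
      LinearIndependent ℂ v ∧
      Submodule.span ℂ (Set.range v) = VM N t ∧
      (∀ i : Fin (min N t + 1),
        Qop N (jr : ℂ) (v i) =
          (-(((jr : ℂ) + (-gammaC N + (i : ℕ))) *
              ((jr : ℂ) + (-gammaC N + (i : ℕ)) + 1))) • v i) ∧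
      (∀ i i' : Fin (min N t + 1), i ≠ i' →
        -(((jr : ℂ) + (-gammaC N + (i : ℕ))) * ((jr : ℂ) + (-gammaC N + (i : ℕ)) + 1)) ≠
        -(((jr : ℂ) + (-gammaC N + (i' : ℕ))) *
            ((jr : ℂ) + (-gammaC N + (i' : ℕ)) + 1))) :=
  casimir_diagonalizable_on_VM_general N jr t fun _ hs _ => two_mul_add_one_add_ne_of_lt hgt hs

end
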